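/- For every τ in the complex upper half-plane: α(−1/(3τ)) = β(τ) and β(−1/(3τ)) = α(τ); consequently α(−1/(3τ))³·(α(τ)³ − 27) = 27·α(τ)³ and β(−1/(3τ))³·(β(τ)³ − 27) = 27·β(τ)³. -/

import Mathlib

open Complex

/-- The Dedekind eta function `η(τ) = e^{πiτ/12} ∏_{n≥1} (1 - e^{2πinτ})`. -/
noncomputable def dedekindEta (τ : ℂ) : ℂ :=
  Complex.exp (Real.pi * I * τ / 12) *
    ∏' n : ℕ, (1 - Complex.exp (2 * Real.pi * I * (n + 1) * τ))

/-- `α(τ) = 3 + 27 η(9τ)³/η(τ)³`. -/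
noncomputable def alpha (τ : ℂ) : ℂ :=
  3 + 27 * dedekindEta (9 * τ) ^ 3 / dedekindEta τ ^ 3

/-- `β(τ) = 3 + η(τ/3)³/η(3τ)³`. -/
noncomputable def beta (τ : ℂ) : ℂ :=
  3 + dedekindEta (τ / 3) ^ 3 / dedekindEta (3 * τ) ^ 3

/-!
Jacobi's identity `∏ (1 - qⁿ)³ = ∑ (-1)ᵏ (2k + 1) q^(k(k+1)/2)` is obtained by deforming its right
side to a series `F(x)` which is Jacobi's sum at `x = 0`, collapses to one term at `x = 1`, and
satisfies `(1 - x²q²)(1 - x²q³) F(xq) = (1 - xq)⁴ F(x)`; iterating from `x = 1` along `x = qⁿ`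
evaluates `F(0)`.

Modulo 3, triangular numbers are 0 except at `k = 3m + 1`, where `k(k+1)/2 = 9 m(m+1)/2 + 1`. With
`E(q) = ∏ (1 - qⁿ)`, this makes `E(ωq)³ + 3ωq E(q⁹)³` the same for every cube root of unity `ω`.
Since `∏_ω E(ωq)` is a quotient of values of `E` at powers of `q`, multiplying over `ω` gives an
identity between `η(τ)`, `η(3τ)` and `η(9τ)`, that is, `β(τ)³ - 27 = (η(τ)/η(3τ))¹²`. The inversion
`η(-1/τ) = √(τ/i) η(τ)` exchanges `α` and `β` and turns this into `(α³ - 27)(β³ - 27) = 27²`, which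
is equivalent to each of the two cubic relations.
-/

section EulerFunction

variable {𝕜 : Type*} [NormedField 𝕜] {q x : 𝕜}

theorem norm_pow_lt_one (hq : ‖q‖ < 1) {n : ℕ} (hn : n ≠ 0) : ‖q ^ n‖ < 1 :=
  (norm_pow q n).trans_lt (pow_lt_one₀ (norm_nonneg q) hq hn)

theorem norm_pow_le_one (hq : ‖q‖ ≤ 1) (n : ℕ) : ‖q ^ n‖ ≤ 1 :=
  (norm_pow q n).trans_le (pow_le_one₀ (norm_nonneg q) hq)

theorem one_sub_mul_pow_ne_zero (hq : ‖q‖ < 1) (hx : ‖x‖ ≤ 1) (n : ℕ) :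
    1 - x * q ^ (n + 1) ≠ 0 := by
  refine sub_ne_zero.2 fun h ↦ ?_
  have hlt : ‖x * q ^ (n + 1)‖ < 1 := by
    rw [norm_mul]
    exact mul_lt_one_of_nonneg_of_lt_one_right hx (norm_nonneg _)
      (norm_pow_lt_one hq n.succ_ne_zero)
  simp [← h] at hlt

/-- Euler's function `∏_{n≥1} (1 - qⁿ)`, the product in the Dedekind eta function. -/
noncomputable def eulerFunction (q : 𝕜) : 𝕜 :=
  ∏' n : ℕ, (1 - q ^ (n + 1))

theorem summable_norm_neg_pow_succ (hq : ‖q‖ < 1) : Summable fun n : ℕ ↦ ‖-q ^ (n + 1)‖ := by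
  simpa only [norm_neg, norm_pow] using
    (summable_nat_add_iff 1).2 (summable_geometric_of_lt_one (norm_nonneg q) hq)

theorem one_sub_pow_succ_ne_zero (hq : ‖q‖ < 1) (n : ℕ) : 1 - q ^ (n + 1) ≠ 0 := by
  simpa using one_sub_mul_pow_ne_zero (x := 1) hq norm_one.le n

variable [CompleteSpace 𝕜]

theorem hasProd_eulerFunction (hq : ‖q‖ < 1) :
    HasProd (fun n : ℕ ↦ 1 - q ^ (n + 1)) (eulerFunction q) := by
  have multipliable := multipliable_one_add_of_summable (f := fun n : ℕ ↦ -q ^ (n + 1))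
  simp only [← sub_eq_add_neg] at multipliable
  exact (multipliable (summable_norm_neg_pow_succ hq)).hasProd

theorem eulerFunction_ne_zero (hq : ‖q‖ < 1) : eulerFunction q ≠ 0 := by
  have tprod_ne_zero := tprod_one_add_ne_zero_of_summable (f := fun n : ℕ ↦ -q ^ (n + 1))
  simp only [← sub_eq_add_neg] at tprod_ne_zero
  exact tprod_ne_zero (one_sub_pow_succ_ne_zero hq) (summable_norm_neg_pow_succ hq)

end EulerFunction

section JacobiIdentity

open Filter Finset Topology

section Recurrence

variable {𝕜 : Type*} [Field 𝕜] {q x : 𝕜}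

/-- The product `∏_{j<k} q(x - qʲ)/(1 - xqʲ⁺¹)`, the numerator of `jacobiTerm`. -/
def jacobiProd (q x : 𝕜) (k : ℕ) : 𝕜 :=
  ∏ j ∈ range k, q * (x - q ^ j) / (1 - x * q ^ (j + 1))

/-- The `k`-th term, without its weight `2k + 1`, of the deformation in `x` of Jacobi's series. It
is `(-1)ᵏ q^(k(k+1)/2)` at `x = 0`, and vanishes for `k ≠ 0` at `x = 1`. -/
def jacobiTerm (q x : 𝕜) (k : ℕ) : 𝕜 :=
  jacobiProd q x k / (1 - x * q ^ (k + 1))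

theorem jacobiProd_zero (q x : 𝕜) : jacobiProd q x 0 = 1 :=
  prod_range_zero _

theorem jacobiProd_succ (q x : 𝕜) (k : ℕ) :
    jacobiProd q x (k + 1) = jacobiProd q x k * (q * (x - q ^ k) / (1 - x * q ^ (k + 1))) :=
  prod_range_succ _ k

theorem jacobiProd_succ_mul_right (h : ∀ j : ℕ, 1 - x * q ^ (j + 1) ≠ 0) (k : ℕ) :
    jacobiProd q (x * q) (k + 1) = -q ^ (k + 1) * (1 - x * q) ^ 2 /
      ((1 - x * q ^ (k + 1)) * (1 - x * q ^ (k + 2))) * jacobiProd q x k := by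
  induction k with
  | zero =>
    have h₀ := h 0
    rw [jacobiProd_succ, jacobiProd_zero, jacobiProd_zero,
      show 1 - x * q * q ^ (0 + 1) = 1 - x * q ^ (0 + 2) by ring]
    simp only [zero_add, pow_one] at *
    field_simp
    ring
  | succ k ih =>
    have h₁ := h (k + 1)
    have h₂ := h (k + 2)
    rw [jacobiProd_succ, ih, jacobiProd_succ,
      show 1 - x * q * q ^ (k + 1 + 1) = 1 - x * q ^ (k + 2 + 1) by ring]
    simp only [add_assoc, one_add_one_eq_two, Nat.reduceAdd] at *
    field_simp
    ring

theorem jacobiTerm_succ_mul_right (h : ∀ j : ℕ, 1 - x * q ^ (j + 1) ≠ 0) (k : ℕ) :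
    (1 - x ^ 2 * q ^ 2) * (1 - x ^ 2 * q ^ 3) * jacobiTerm q (x * q) (k + 1) =
      (1 - x * q) ^ 4 * jacobiTerm q x (k + 1) - x * q * (1 - x * q) ^ 2 *
        (jacobiTerm q x k - 2 * jacobiTerm q x (k + 1) + jacobiTerm q x (k + 2)) := by
  have h₀ := h k
  have h₁ := h (k + 1)
  have h₂ := h (k + 2)
  simp only [jacobiTerm, jacobiProd_succ_mul_right h, jacobiProd_succ q x]
  rw [show 1 - x * q * q ^ (k + 1 + 1) = 1 - x * q ^ (k + 2 + 1) by ring]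
  simp only [add_assoc, one_add_one_eq_two, Nat.reduceAdd] at *
  field_simp
  ring

/-- Summed by parts twice against the linear weight `2k + 1`, the second difference in
`jacobiTerm_succ_mul_right` leaves only boundary terms. -/
theorem sum_range_jacobiTerm_mul_right (h : ∀ j : ℕ, 1 - x * q ^ (j + 1) ≠ 0) (K : ℕ) :
    (1 - x ^ 2 * q ^ 2) * (1 - x ^ 2 * q ^ 3) *
        ∑ k ∈ range (K + 1), (2 * k + 1) * jacobiTerm q (x * q) k =
      (1 - x * q) ^ 4 * ∑ k ∈ range (K + 1), (2 * k + 1) * jacobiTerm q x k -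
        x * q * (1 - x * q) ^ 2 * ((2 * K + 1) * jacobiTerm q x (K + 1) -
          (2 * K + 3) * jacobiTerm q x K) := by
  induction K with
  | zero =>
    have h₀ := h 0
    have h₁ := h 1
    simp only [sum_range_succ, sum_range_zero, jacobiTerm, jacobiProd_succ, jacobiProd_zero]
    rw [show 1 - x * q * q ^ (0 + 1) = 1 - x * q ^ (1 + 1) by ring]
    simp only [zero_add, Nat.cast_zero, mul_zero] at *
    field_simp
    ring
  | succ K ih =>
    rw [sum_range_succ _ (K + 1), sum_range_succ _ (K + 1), mul_add, ih]
    push_cast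
    linear_combination (2 * K + 3) * jacobiTerm_succ_mul_right h K

end Recurrence

section Summation

variable {𝕜 : Type*} [NormedField 𝕜] {q x : 𝕜}

/-- A bound for `‖jacobiTerm q x k‖` in terms of `r = ‖q‖`, uniform in `‖x‖ ≤ 1`. -/
noncomputable def jacobiMajorant (r : ℝ) (k : ℕ) : ℝ :=
  (∏ j ∈ range k, r * (1 + r ^ j) / (1 - r ^ (j + 1))) / (1 - r)

theorem norm_jacobiTerm_le (hq : ‖q‖ < 1) (hx : ‖x‖ ≤ 1) (k : ℕ) :
    ‖jacobiTerm q x k‖ ≤ jacobiMajorant ‖q‖ k := by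
  have pow_lt (j : ℕ) : ‖q‖ ^ (j + 1) < 1 := pow_lt_one₀ (norm_nonneg q) hq j.succ_ne_zero
  have le_norm_denom (j : ℕ) : 1 - ‖q‖ ^ (j + 1) ≤ ‖1 - x * q ^ (j + 1)‖ := calc
    1 - ‖q‖ ^ (j + 1) ≤ 1 - ‖x‖ * ‖q‖ ^ (j + 1) := by
      gcongr
      exact mul_le_of_le_one_left (by positivity) hx
    _ = ‖(1 : 𝕜)‖ - ‖x * q ^ (j + 1)‖ := by rw [norm_one, norm_mul, norm_pow]
    _ ≤ ‖1 - x * q ^ (j + 1)‖ := norm_sub_norm_le _ _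
  have norm_sub_le_one_add (j : ℕ) : ‖x - q ^ j‖ ≤ 1 + ‖q‖ ^ j :=
    (norm_sub_le _ _).trans (by rw [norm_pow]; gcongr)
  have le_last : 1 - ‖q‖ ≤ ‖1 - x * q ^ (k + 1)‖ :=
    (sub_le_sub_left (pow_le_of_le_one (norm_nonneg q) hq.le k.succ_ne_zero) 1).trans
      (le_norm_denom k)
  rw [jacobiTerm, jacobiProd, jacobiMajorant, norm_div, norm_prod]
  gcongr with j
  · exact prod_nonneg fun j _ ↦ div_nonneg (by positivity) (sub_nonneg.2 (pow_lt j).le)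
  · rw [norm_div, norm_mul]
    gcongr
    · exact sub_pos.2 (pow_lt j)
    · exact norm_sub_le_one_add j
    · exact le_norm_denom j

theorem summable_mul_jacobiMajorant {r : ℝ} (hr₀ : 0 ≤ r) (hr : r < 1) :
    Summable fun k : ℕ ↦ (2 * k + 1) * jacobiMajorant r k := by
  obtain ⟨s, hrs, hs⟩ := exists_between hr
  have tendsto_pow : Tendsto (fun k : ℕ ↦ r ^ k) atTop (𝓝 0) :=
    tendsto_pow_atTop_nhds_zero_of_lt_one hr₀ hr
  have tendsto_weight : Tendsto (fun k : ℕ ↦ 1 + 2 / (2 * k + 1 : ℝ)) atTop (𝓝 (1 + 0)) :=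
    (tendsto_const_nhds.div_atTop <| tendsto_atTop_add_const_right _ _ <|
      tendsto_natCast_atTop_atTop.const_mul_atTop two_pos).const_add 1
  have tendsto_ratio : Tendsto (fun k : ℕ ↦ (1 + 2 / (2 * k + 1 : ℝ)) *
      (r * (1 + r ^ k) / (1 - r ^ (k + 1)))) atTop (𝓝 r) := by
    simpa using tendsto_weight.mul (((tendsto_pow.const_add 1).const_mul r).div
      (((tendsto_add_atTop_iff_nat 1).2 tendsto_pow).const_sub 1) (by simp))
  refine summable_of_ratio_norm_eventually_le hs ?_
  filter_upwards [tendsto_ratio.eventually_le_const hrs] with k hk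
  have ratio_eq : (2 * (k + 1 : ℕ) + 1) * jacobiMajorant r (k + 1) =
      (1 + 2 / (2 * k + 1 : ℝ)) * (r * (1 + r ^ k) / (1 - r ^ (k + 1))) *
        ((2 * k + 1) * jacobiMajorant r k) := by
    rw [jacobiMajorant, prod_range_succ, jacobiMajorant]
    push_cast
    field_simp
    ring
  have pow_lt : r ^ (k + 1) < 1 := pow_lt_one₀ hr₀ hr k.succ_ne_zero
  have ratio_nonneg : 0 ≤ (1 + 2 / (2 * k + 1 : ℝ)) * (r * (1 + r ^ k) / (1 - r ^ (k + 1))) :=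
    mul_nonneg (by positivity) (div_nonneg (by positivity) (sub_nonneg.2 pow_lt.le))
  rw [ratio_eq, norm_mul, Real.norm_of_nonneg ratio_nonneg]
  gcongr

theorem norm_mul_jacobiTerm_le (hq : ‖q‖ < 1) (hx : ‖x‖ ≤ 1) (k : ℕ) :
    ‖(2 * k + 1) * jacobiTerm q x k‖ ≤ (2 * k + 1) * jacobiMajorant ‖q‖ k := by
  have norm_weight : ‖(2 * k + 1 : 𝕜)‖ ≤ 2 * k + 1 := by
    simpa using Nat.norm_cast_le (α := 𝕜) (2 * k + 1)
  rw [norm_mul]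
  gcongr
  exact norm_jacobiTerm_le hq hx k

theorem tendsto_jacobiTerm_atTop (hq : ‖q‖ < 1) (hx : ‖x‖ ≤ 1) :
    Tendsto (jacobiTerm q x) atTop (𝓝 0) :=
  squeeze_zero_norm (fun k ↦ (norm_jacobiTerm_le hq hx k).trans <|
      le_mul_of_one_le_left ((norm_nonneg _).trans (norm_jacobiTerm_le hq hx k))
        (le_add_of_nonneg_left (by positivity)))
    (summable_mul_jacobiMajorant (norm_nonneg q) hq).tendsto_atTop_zero

/-- The deformation `∑ (2k + 1) tₖ(x)` of Jacobi's series, where `tₖ(x)` is `jacobiTerm q x k`. -/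
noncomputable def jacobiSeries (q x : 𝕜) : 𝕜 :=
  ∑' k : ℕ, (2 * k + 1) * jacobiTerm q x k

theorem jacobiSeries_one : jacobiSeries q 1 = (1 - q)⁻¹ := by
  have jacobiTerm_one (k : ℕ) (hk : k ≠ 0) : (2 * k + 1) * jacobiTerm q 1 k = 0 := by
    rw [jacobiTerm, jacobiProd, prod_eq_zero (mem_range.2 hk.pos) (by simp), zero_div, mul_zero]
  rw [jacobiSeries, tsum_eq_single 0 jacobiTerm_one]
  simp [jacobiTerm, jacobiProd]

variable [CompleteSpace 𝕜]

theorem hasSum_jacobiSeries (hq : ‖q‖ < 1) (hx : ‖x‖ ≤ 1) :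
    HasSum (fun k : ℕ ↦ (2 * k + 1) * jacobiTerm q x k) (jacobiSeries q x) :=
  (Summable.of_norm_bounded (summable_mul_jacobiMajorant (norm_nonneg q) hq)
    (norm_mul_jacobiTerm_le hq hx)).hasSum

theorem continuousOn_jacobiSeries (hq : ‖q‖ < 1) :
    ContinuousOn (jacobiSeries q) (Metric.closedBall 0 1) := by
  refine continuousOn_tsum (fun k ↦ ?_) (summable_mul_jacobiMajorant (norm_nonneg q) hq)
    fun k x hx ↦ norm_mul_jacobiTerm_le hq (mem_closedBall_zero_iff.1 hx) k
  have denom_ne_zero (j : ℕ) : ∀ x ∈ Metric.closedBall (0 : 𝕜) 1, 1 - x * q ^ (j + 1) ≠ 0 :=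
    fun x hx ↦ one_sub_mul_pow_ne_zero hq (mem_closedBall_zero_iff.1 hx) j
  exact continuousOn_const.mul <|
    (continuousOn_finsetProd _ fun j _ ↦ .div (by fun_prop) (by fun_prop) (denom_ne_zero j)).div
      (by fun_prop) (denom_ne_zero k)

theorem jacobiSeries_mul_right (hq : ‖q‖ < 1) (hx : ‖x‖ ≤ 1) :
    (1 - x ^ 2 * q ^ 2) * (1 - x ^ 2 * q ^ 3) * jacobiSeries q (x * q) =
      (1 - x * q) ^ 4 * jacobiSeries q x := by
  have hxq : ‖x * q‖ ≤ 1 := by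
    rw [norm_mul]
    exact mul_le_one₀ hx (norm_nonneg q) hq.le
  have tendsto_partialSum {y : 𝕜} (hy : ‖y‖ ≤ 1) :
      Tendsto (fun K ↦ ∑ k ∈ range (K + 1), (2 * k + 1) * jacobiTerm q y k) atTop
        (𝓝 (jacobiSeries q y)) :=
    (tendsto_add_atTop_iff_nat 1).2 (hasSum_jacobiSeries hq hy).tendsto_sum_nat
  have tendsto_term := tendsto_jacobiTerm_atTop hq hx
  have tendsto_weighted := (hasSum_jacobiSeries hq hx).summable.tendsto_atTop_zero
  have tendsto_boundary : Tendsto (fun K : ℕ ↦ (2 * K + 1) * jacobiTerm q x (K + 1) -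
      (2 * K + 3) * jacobiTerm q x K) atTop (𝓝 0) := by
    have h := (((tendsto_add_atTop_iff_nat 1).2 tendsto_weighted).sub tendsto_weighted).sub
      ((((tendsto_add_atTop_iff_nat 1).2 tendsto_term).add tendsto_term).const_mul 2)
    simp only [sub_zero, add_zero, mul_zero] at h
    refine h.congr fun K ↦ ?_
    push_cast
    ring
  refine tendsto_nhds_unique ((tendsto_partialSum hxq).const_mul _) ?_
  simp_rw [sum_range_jacobiTerm_mul_right (one_sub_mul_pow_ne_zero hq hx)]
  simpa using ((tendsto_partialSum hx).const_mul _).sub (tendsto_boundary.const_mul _)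

theorem prod_range_mul_jacobiSeries_pow (hq : ‖q‖ < 1) (n : ℕ) :
    (∏ k ∈ range (2 * n + 1), (1 - q ^ (k + 1))) * jacobiSeries q (q ^ n) =
      (∏ k ∈ range n, (1 - q ^ (k + 1))) ^ 4 := by
  induction n with
  | zero =>
    have h := one_sub_pow_succ_ne_zero hq 0
    rw [zero_add, pow_one] at h
    simp [jacobiSeries_one, h]
  | succ n ih =>
    have step := jacobiSeries_mul_right hq (norm_pow_le_one hq.le n)
    simp only [← pow_succ, ← pow_mul, ← pow_add] at step
    rw [prod_range_succ _ n, mul_pow, ← ih, show 2 * (n + 1) + 1 = 2 * n + 1 + 1 + 1 by ring,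
      prod_range_succ, prod_range_succ]
    linear_combination (∏ k ∈ range (2 * n + 1), (1 - q ^ (k + 1))) * step

theorem jacobiSeries_zero (hq : ‖q‖ < 1) : jacobiSeries q 0 = eulerFunction q ^ 3 := by
  have tendsto_prod := (hasProd_eulerFunction hq).tendsto_prod_nat
  have tendsto_odd : Tendsto (fun n : ℕ ↦ 2 * n + 1) atTop atTop :=
    tendsto_atTop_mono (fun n ↦ show n ≤ 2 * n + 1 by lia) tendsto_id
  have continuousAt_zero : ContinuousAt (jacobiSeries q) 0 :=
    (continuousOn_jacobiSeries hq).continuousAt (Metric.closedBall_mem_nhds 0 one_pos)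
  have tendsto_series : Tendsto (fun n : ℕ ↦ jacobiSeries q (q ^ n)) atTop
      (𝓝 (jacobiSeries q 0)) :=
    continuousAt_zero.tendsto.comp (tendsto_pow_atTop_nhds_zero_of_norm_lt_one hq)
  have mul_eq : eulerFunction q * jacobiSeries q 0 = eulerFunction q ^ 4 :=
    tendsto_nhds_unique ((tendsto_prod.comp tendsto_odd).mul tendsto_series) <|
      (tendsto_prod.pow 4).congr fun n ↦ (prod_range_mul_jacobiSeries_pow hq n).symm
  exact mul_left_cancel₀ (eulerFunction_ne_zero hq) (mul_eq.trans (pow_succ' _ 3))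

theorem hasSum_eulerFunction_pow_three (hq : ‖q‖ < 1) :
    HasSum (fun k : ℕ ↦ (-1) ^ k * (2 * k + 1) * q ^ (k * (k + 1) / 2))
      (eulerFunction q ^ 3) := by
  have jacobiTerm_zero (k : ℕ) : jacobiTerm q 0 k = (-1) ^ k * q ^ (k * (k + 1) / 2) := by
    have sum_succ : ∑ j ∈ range k, (j + 1) = k * (k + 1) / 2 := by
      rw [← add_zero (∑ j ∈ range k, (j + 1)), ← sum_range_succ' fun j ↦ j, sum_range_id,
        add_tsub_cancel_right, mul_comm]
    simp [jacobiTerm, jacobiProd, prod_neg, ← pow_succ', prod_pow_eq_pow_sum, sum_succ]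
  simpa only [jacobiSeries_zero hq, jacobiTerm_zero, mul_left_comm, mul_assoc] using
    hasSum_jacobiSeries hq (norm_zero.trans_le zero_le_one)

end Summation

end JacobiIdentity

section Dissection

open Finset

theorem triangle_three_mul_add_one (m : ℕ) :
    (3 * m + 1) * (3 * m + 1 + 1) / 2 = 9 * (m * (m + 1) / 2) + 1 := by
  obtain ⟨t, ht⟩ := (Nat.even_mul_succ_self m).two_dvd
  rw [ht, Nat.mul_div_cancel_left _ two_pos,
    show (3 * m + 1) * (3 * m + 1 + 1) = 2 * (9 * t + 1) by linear_combination 9 * ht,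
    Nat.mul_div_cancel_left _ two_pos]

theorem three_dvd_triangle {k : ℕ} (hk : k % 3 ≠ 1) : 3 ∣ k * (k + 1) / 2 := by
  have three_dvd_mul : 3 ∣ k * (k + 1) := by
    rcases (by lia : k % 3 = 0 ∨ k % 3 = 2) with h | h
    · exact (Nat.dvd_of_mod_eq_zero h).mul_right _
    · exact Dvd.dvd.mul_left (by lia) _
  have := Nat.div_mul_cancel (Nat.even_mul_succ_self k).two_dvd
  lia

variable {𝕜 : Type*} [NormedField 𝕜] {q ω : 𝕜}

theorem norm_root_mul_lt_one {n : ℕ} (hn : 0 < n) (hω : ω ^ n = 1) (hq : ‖q‖ < 1) :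
    ‖ω * q‖ < 1 := by
  rwa [norm_mul, (isOfFinOrder_iff_pow_eq_one.2 ⟨n, hn, hω⟩).norm_eq_one, one_mul]

variable [CompleteSpace 𝕜]

theorem eulerFunction_mul_pow_three (hq : ‖q‖ < 1) (hω : ω ^ 3 = 1) :
    eulerFunction (ω * q) ^ 3 - eulerFunction q ^ 3 =
      3 * (1 - ω) * q * eulerFunction (q ^ 9) ^ 3 := by
  have hωq := norm_root_mul_lt_one three_pos hω hq
  have hq9 : ‖q ^ 9‖ < 1 := norm_pow_lt_one hq (by simp)
  have hasSum_sub :=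
    (hasSum_eulerFunction_pow_three hωq).sub (hasSum_eulerFunction_pow_three hq)
  have injective_index : Function.Injective fun m : ℕ ↦ 3 * m + 1 := fun m n h ↦ by simpa using h
  refine ((injective_index.hasSum_iff fun k hk ↦ ?_).2 hasSum_sub).unique ?_
  · have mod_ne : k % 3 ≠ 1 := fun h ↦ hk ⟨k / 3, show 3 * (k / 3) + 1 = k by lia⟩
    obtain ⟨t, ht⟩ := three_dvd_triangle mod_ne
    rw [ht, mul_pow, pow_mul ω, hω, one_pow, one_mul, sub_self]
  · refine ((hasSum_eulerFunction_pow_three hq9).mul_left (3 * (1 - ω) * q)).congr_fun fun m ↦ ?_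
    rw [Function.comp_apply, triangle_three_mul_add_one, ← pow_mul]
    have root_pow : (ω * q) ^ (9 * (m * (m + 1) / 2) + 1) =
        ω * q ^ (9 * (m * (m + 1) / 2) + 1) := by
      rw [mul_pow, pow_succ ω, show 9 * (m * (m + 1) / 2) = 3 * (3 * (m * (m + 1) / 2)) by ring,
        pow_mul, hω, one_pow, one_mul]
    have sign : (-1 : 𝕜) ^ (3 * m + 1) = -(-1) ^ m := by
      rw [pow_succ, pow_mul]
      norm_num
    rw [root_pow, sign]
    push_cast
    ring

theorem pow_sub_pow_eq_prod_range_sub_mul {R : Type*} [CommRing R] [IsDomain R] {ω : R} {n : ℕ}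
    (hω : IsPrimitiveRoot ω n) (hn : 0 < n) (x y : R) :
    x ^ n - y ^ n = ∏ i ∈ range n, (x - ω ^ i * y) := by
  simpa [Polynomial.eval_prod] using
    congrArg (Polynomial.eval x) (X_pow_sub_C_eq_prod hω hn (rfl : y ^ n = y ^ n))

theorem prod_range_one_sub_root_mul_pow {R : Type*} [CommRing R] [IsDomain R] {ω : R} {p : ℕ}
    (hp : p.Prime) (hω : IsPrimitiveRoot ω p) (x : R) (m : ℕ) :
    ∏ i ∈ range p, (1 - (ω ^ i * x) ^ m) =
      if p ∣ m then (1 - x ^ m) ^ p else 1 - (x ^ p) ^ m := by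
  simp only [mul_pow, pow_right_comm ω]
  split_ifs with h
  · simp [(hω.pow_eq_one_iff_dvd m).2 h]
  · rw [← pow_sub_pow_eq_prod_range_sub_mul
      (hω.pow_of_coprime m ((hp.coprime_iff_not_dvd.2 h).symm)) hp.pos, one_pow, pow_right_comm]

theorem hasProd_ite_dvd {M : Type*} [CommMonoid M] [TopologicalSpace M] {p : ℕ} (hp : 0 < p)
    {f : ℕ → M} {a : M} (hf : HasProd (fun n : ℕ ↦ f (p * (n + 1))) a) :
    HasProd (fun n : ℕ ↦ if p ∣ n + 1 then f (n + 1) else 1) a := by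
  have pred_add_one (n : ℕ) : p * (n + 1) - 1 + 1 = p * (n + 1) :=
    Nat.sub_add_cancel (Nat.mul_pos hp n.succ_pos)
  have injective_index : Function.Injective fun n : ℕ ↦ p * (n + 1) - 1 := fun m n h ↦ by
    have mul_eq : p * (m + 1) = p * (n + 1) := by
      rw [← pred_add_one m, ← pred_add_one n]
      exact congrArg (· + 1) h
    simpa using Nat.eq_of_mul_eq_mul_left hp mul_eq
  refine (injective_index.hasProd_iff fun n hn ↦ if_neg ?_).1 ?_
  · rintro ⟨_ | d, hd⟩
    · lia
    · exact hn ⟨d, by simp [← hd]⟩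
  · simpa [Function.comp_def, pred_add_one] using hf

theorem prod_eulerFunction_root_mul {p : ℕ} (hp : p.Prime) (hω : IsPrimitiveRoot ω p)
    (hq : ‖q‖ < 1) :
    (∏ i ∈ range p, eulerFunction (ω ^ i * q)) * eulerFunction (q ^ p ^ 2) =
      eulerFunction (q ^ p) ^ (p + 1) := by
  have root_pow (i : ℕ) : (ω ^ i) ^ p = 1 := by rw [pow_right_comm, hω.pow_eq_one, one_pow]
  have hqp : ‖q ^ p‖ < 1 := norm_pow_lt_one hq hp.ne_zero
  have hasProd_roots := hasProd_prod fun i (_ : i ∈ range p) ↦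
    hasProd_eulerFunction (norm_root_mul_lt_one hp.pos (root_pow i) hq)
  have hasProd_sq : HasProd (fun n ↦ if p ∣ n + 1 then 1 - (q ^ p) ^ (n + 1) else 1)
      (eulerFunction (q ^ p ^ 2)) := by
    refine hasProd_ite_dvd hp.pos (f := fun n ↦ 1 - (q ^ p) ^ n) ?_
    simpa only [pow_mul, pow_two p] using hasProd_eulerFunction (norm_pow_lt_one hqp hp.ne_zero)
  have hasProd_pow : HasProd (fun n ↦ if p ∣ n + 1 then (1 - q ^ (n + 1)) ^ p else 1)
      (eulerFunction (q ^ p) ^ p) := by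
    refine hasProd_ite_dvd hp.pos (f := fun n ↦ (1 - q ^ n) ^ p) ?_
    simpa only [pow_mul] using (hasProd_eulerFunction hqp).pow p
  rw [pow_succ' (eulerFunction _)]
  refine (hasProd_roots.mul hasProd_sq).unique
    (((hasProd_eulerFunction hqp).mul hasProd_pow).congr_fun fun n ↦ ?_)
  rw [prod_range_one_sub_root_mul_pow hp hω]
  split_ifs <;> ring

theorem eulerFunction_cubic (hω : IsPrimitiveRoot ω 3) (hq : ‖q‖ < 1) :
    (eulerFunction q ^ 3 + 3 * q * eulerFunction (q ^ 9) ^ 3) ^ 3 * eulerFunction (q ^ 9) ^ 3 =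
      eulerFunction (q ^ 3) ^ 12 + 27 * q ^ 3 * eulerFunction (q ^ 9) ^ 12 := by
  set b := 3 * q * eulerFunction (q ^ 9) ^ 3 with hb
  have eulerFunction_root (i : ℕ) :
      eulerFunction (ω ^ i * q) ^ 3 = eulerFunction q ^ 3 + b - ω ^ i * b := by
    have hωi : (ω ^ i) ^ 3 = 1 := by rw [pow_right_comm, hω.pow_eq_one, one_pow]
    linear_combination eulerFunction_mul_pow_three hq hωi
  have prod_pow_three : (∏ i ∈ range 3, eulerFunction (ω ^ i * q)) ^ 3 =
      (eulerFunction q ^ 3 + b) ^ 3 - b ^ 3 := by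
    rw [← prod_pow, pow_sub_pow_eq_prod_range_sub_mul hω three_pos]
    exact prod_congr rfl fun i _ ↦ eulerFunction_root i
  have prod_root := congrArg (· ^ 3) (prod_eulerFunction_root_mul Nat.prime_three hω hq)
  simp only [mul_pow, prod_pow_three] at prod_root
  have b_cubed : b ^ 3 = 27 * q ^ 3 * eulerFunction (q ^ 9) ^ 9 := by
    rw [hb]
    ring
  linear_combination prod_root + eulerFunction (q ^ 9) ^ 3 * b_cubed

end Dissection

section EtaQuotients

theorem ofReal_mul_cpow {c : ℝ} (hc : 0 < c) {z : ℂ} (hz : z ≠ 0) (s : ℂ) :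
    (c * z) ^ s = (c : ℂ) ^ s * z ^ s := by
  have hc' : (c : ℂ) ≠ 0 := ofReal_ne_zero.2 hc.ne'
  rw [cpow_def_of_ne_zero (mul_ne_zero hc' hz), cpow_def_of_ne_zero hc', cpow_def_of_ne_zero hz,
    log_ofReal_mul hc hz, ofReal_log hc.le, add_mul, exp_add]

theorem csqrt_ofReal_mul {c : ℝ} (hc : 0 < c) {z : ℂ} (hz : z ≠ 0) :
    Complex.sqrt (c * z) = √c * Complex.sqrt z := by
  have cpow_half : (c : ℂ) ^ (2⁻¹ : ℂ) = √c := Complex.sqrt_of_nonneg (zero_le_real.2 hc.le)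
  rw [Complex.sqrt, ofReal_mul_cpow hc hz, cpow_half, Complex.sqrt]

theorem dedekindEta_natCast_mul (n : ℕ) (τ : ℂ) :
    dedekindEta (n * τ) =
      exp (Real.pi * I * τ / 12) ^ n * eulerFunction (exp (2 * Real.pi * I * τ) ^ n) := by
  simp only [dedekindEta, eulerFunction, ← exp_nat_mul]
  push_cast
  congr 3
  · ring
  · ext k
    ring_nf

theorem norm_exp_two_pi_I_mul_lt_one {τ : ℂ} (hτ : 0 < τ.im) :
    ‖exp (2 * Real.pi * I * τ)‖ < 1 := by
  simpa using UpperHalfPlane.norm_exp_two_pi_I_lt_one ⟨τ, hτ⟩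

theorem dedekindEta_ne_zero {τ : ℂ} (hτ : 0 < τ.im) : dedekindEta τ ≠ 0 := by
  have eta_one := dedekindEta_natCast_mul 1 τ
  rw [Nat.cast_one, one_mul, pow_one, pow_one] at eta_one
  rw [eta_one]
  exact mul_ne_zero (exp_ne_zero _) (eulerFunction_ne_zero (norm_exp_two_pi_I_mul_lt_one hτ))

theorem dedekindEta_cubic {τ : ℂ} (hτ : 0 < τ.im) :
    (dedekindEta τ ^ 3 + 3 * dedekindEta (9 * τ) ^ 3) ^ 3 * dedekindEta (9 * τ) ^ 3 =
      dedekindEta (3 * τ) ^ 12 + 27 * dedekindEta (9 * τ) ^ 12 := by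
  have eta_one := dedekindEta_natCast_mul 1 τ
  have eta_three := dedekindEta_natCast_mul 3 τ
  have eta_nine := dedekindEta_natCast_mul 9 τ
  have exp_pow : exp (Real.pi * I * τ / 12) ^ 24 = exp (2 * Real.pi * I * τ) := by
    rw [← exp_nat_mul]
    push_cast
    ring_nf
  have cubic := eulerFunction_cubic (isPrimitiveRoot_exp 3 three_ne_zero)
    (norm_exp_two_pi_I_mul_lt_one hτ)
  simp only [Nat.cast_one, Nat.cast_ofNat, one_mul, pow_one] at eta_one eta_three eta_nine
  rw [eta_one, eta_three, eta_nine]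
  simp only [← exp_pow] at cubic ⊢
  linear_combination exp (Real.pi * I * τ / 12) ^ 36 * cubic

theorem dedekindEta_neg_one_div {τ : ℂ} (hτ : 0 < τ.im) :
    dedekindEta (-1 / τ) = (Complex.sqrt I)⁻¹ * (Complex.sqrt τ * dedekindEta τ) := by
  have dedekindEta_eq_eta : dedekindEta = ModularForm.eta := by
    ext z
    simp only [dedekindEta, ModularForm.eta, ModularForm.eta_q_eq_cexp, Function.Periodic.qParam]
    congr 2
    push_cast
    ring
  rw [dedekindEta_eq_eta]
  exact ModularForm.eta_comp_eq_csqrt_I_inv hτ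

theorem dedekindEta_neg_one_div_mul {c : ℝ} (hc : 0 < c) {τ : ℂ} (hτ : 0 < τ.im) :
    dedekindEta (-1 / (c * τ)) * dedekindEta τ =
      √c * dedekindEta (c * τ) * dedekindEta (-1 / τ) := by
  have hτ₀ : τ ≠ 0 := fun h ↦ by simp [h] at hτ
  have hcτ : 0 < (c * τ).im := by simpa using mul_pos hc hτ
  rw [dedekindEta_neg_one_div hτ, dedekindEta_neg_one_div hcτ, csqrt_ofReal_mul hc hτ₀]
  ring

theorem im_neg_one_div_pos {τ : ℂ} (hτ : 0 < τ.im) : 0 < (-1 / τ).im := by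
  simpa [div_eq_mul_inv] using UpperHalfPlane.im_inv_neg_coe_pos ⟨τ, hτ⟩

theorem three_mul_im_pos {τ : ℂ} (hτ : 0 < τ.im) : 0 < (3 * τ).im := by
  simpa using hτ

theorem alpha_neg_one_div {τ : ℂ} (hτ : 0 < τ.im) : alpha (-1 / (3 * τ)) = beta τ := by
  have hτ₃ : 0 < (τ / 3).im := by simpa using hτ
  have inversion := dedekindEta_neg_one_div_mul (c := 9) (by simp) hτ₃
  have sqrt_nine : √9 = 3 := by
    rw [show (9 : ℝ) = 3 ^ 2 by norm_num, Real.sqrt_sq zero_le_three]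
  rw [sqrt_nine, ofReal_ofNat, ofReal_ofNat, show 9 * (τ / 3) = 3 * τ by ring] at inversion
  rw [alpha, beta, show 9 * (-1 / (3 * τ)) = -1 / (τ / 3) by field_simp; norm_num]
  have eta_inv_ne_zero := dedekindEta_ne_zero (im_neg_one_div_pos (three_mul_im_pos hτ))
  have eta_three_ne_zero := dedekindEta_ne_zero (three_mul_im_pos hτ)
  have ratio : 3 * dedekindEta (-1 / (τ / 3)) / dedekindEta (-1 / (3 * τ)) =
      dedekindEta (τ / 3) / dedekindEta (3 * τ) := by
    rw [div_eq_div_iff eta_inv_ne_zero eta_three_ne_zero]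
    linear_combination -inversion
  linear_combination congrArg (· ^ 3) ratio

theorem beta_neg_one_div {τ : ℂ} (hτ : 0 < τ.im) : beta (-1 / (3 * τ)) = alpha τ := by
  rw [← alpha_neg_one_div (im_neg_one_div_pos (three_mul_im_pos hτ))]
  congr 1
  field_simp

theorem beta_pow_three_sub {τ : ℂ} (hτ : 0 < τ.im) :
    beta τ ^ 3 - 27 = (dedekindEta τ / dedekindEta (3 * τ)) ^ 12 := by
  have cubic := dedekindEta_cubic (τ := τ / 3) (by simpa using hτ)
  rw [show 9 * (τ / 3) = 3 * τ by ring, show 3 * (τ / 3) = τ by ring] at cubic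
  have eta_ne_zero := dedekindEta_ne_zero (three_mul_im_pos hτ)
  rw [beta]
  field_simp
  linear_combination cubic

theorem alpha_pow_three_sub_mul_beta_pow_three_sub {τ : ℂ} (hτ : 0 < τ.im) :
    (alpha τ ^ 3 - 27) * (beta τ ^ 3 - 27) = 27 ^ 2 := by
  have inversion := dedekindEta_neg_one_div_mul (c := 3) zero_lt_three hτ
  rw [ofReal_ofNat] at inversion
  have ratio : dedekindEta (-1 / (3 * τ)) / dedekindEta (-1 / τ) *
      (dedekindEta τ / dedekindEta (3 * τ)) = √3 := by
    have eta_inv_ne_zero := dedekindEta_ne_zero (im_neg_one_div_pos hτ)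
    have eta_three_ne_zero := dedekindEta_ne_zero (three_mul_im_pos hτ)
    rw [div_mul_div_comm, inversion, div_eq_iff (mul_ne_zero eta_inv_ne_zero eta_three_ne_zero),
      mul_assoc, mul_comm (dedekindEta (3 * τ))]
  have sq_sqrt : (√3 : ℂ) ^ 2 = 3 := mod_cast Real.sq_sqrt zero_le_three
  rw [← beta_neg_one_div hτ, beta_pow_three_sub (im_neg_one_div_pos (three_mul_im_pos hτ)),
    beta_pow_three_sub hτ, show 3 * (-1 / (3 * τ)) = -1 / τ by field_simp, ← mul_pow, ratio,
    show 12 = 2 * 6 from rfl, pow_mul, sq_sqrt]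
  norm_num

end EtaQuotients

/-- For `τ` in the upper half-plane: `α(−1/(3τ)) = β(τ)`, `β(−1/(3τ)) = α(τ)`, and the
cubed relations `α(−1/(3τ))³(α(τ)³ − 27) = 27α(τ)³`, `β(−1/(3τ))³(β(τ)³ − 27) = 27β(τ)³`. -/
theorem alpha_beta_inversion (τ : ℂ) (hτ : 0 < τ.im) :
    alpha (-1 / (3 * τ)) = beta τ ∧
    beta (-1 / (3 * τ)) = alpha τ ∧
    alpha (-1 / (3 * τ)) ^ 3 * (alpha τ ^ 3 - 27) = 27 * alpha τ ^ 3 ∧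
    beta (-1 / (3 * τ)) ^ 3 * (beta τ ^ 3 - 27) = 27 * beta τ ^ 3 := by
  have relation := alpha_pow_three_sub_mul_beta_pow_three_sub hτ
  rw [alpha_neg_one_div hτ, beta_neg_one_div hτ]
  refine ⟨rfl, rfl, ?_, ?_⟩ <;> linear_combination relation
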